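/- Let A be a real m×n matrix, b ∈ ℝ^m, and let W be a real symmetric n×n matrix all of whose eigenvalues lie in [0,1], with ker(A) ∩ fix(W) = {0}. Fix μ > 0, θ ∈ (0,1], and a real sequence {α_k}_{k≥1} with α_k → 1. Define P = (I_n + μAᵀA)^{−1}(θW + (1−θ)I_n) and r = μ(I_n + μAᵀA)^{−1}Aᵀb. Then I_n − P is invertible, and for all initializations x₀, v₀ ∈ ℝ^n, the α-RED-APG iterates defined for k ≥ 1 by x_k = (I_n + μAᵀA)^{−1}(v_{k−1} + μAᵀb), y_k = x_k + α_k(x_k − x_{k−1}), v_k = θ W y_k + (1−θ) y_k, converge linearly to x* := (I_n − P)^{−1} r: there exist C > 0, β ∈ [0,1), and K ≥ 1 such that ‖x_k − x*‖₂ ≤ C·β^k for all k ≥ K. -/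

import Mathlib

open Filter Matrix

/-- The Euclidean (ℓ²) norm on `Fin n → ℝ`. -/
noncomputable def norm2 {n : ℕ} (x : Fin n → ℝ) : ℝ := Real.sqrt (∑ i, x i ^ 2)

/-- The resolvent matrix `(I + μ AᵀA)⁻¹` appearing in the proximal step for the
least-squares loss. -/
noncomputable def Hmat {n m : ℕ} (A : Matrix (Fin m) (Fin n) ℝ) (μ : ℝ) :
    Matrix (Fin n) (Fin n) ℝ :=
  ((1 : Matrix (Fin n) (Fin n) ℝ) + μ • (Aᵀ * A))⁻¹

/-- The transition matrix `P = (I + μ AᵀA)⁻¹ (θ W + (1-θ) I)` of RED-APG. -/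
noncomputable def Pmat {n m : ℕ} (A : Matrix (Fin m) (Fin n) ℝ)
    (W : Matrix (Fin n) (Fin n) ℝ) (μ θ : ℝ) : Matrix (Fin n) (Fin n) ℝ :=
  Hmat A μ * (θ • W + (1 - θ) • (1 : Matrix (Fin n) (Fin n) ℝ))

/-!
Put `M = I + μ AᵀA` and `V = θ W + (1 - θ) I`, so that `P = M⁻¹ V`. The operator `P` is symmetric
and positive for the inner product `⟪x, y⟫ = xᵀ M y`, and `M - V = μ AᵀA + θ (I - W)` is positive
definite because `ker A ∩ fix W = 0`; hence `0 ≤ P ≤ l` in this inner product for some `l < 1`.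
The errors `e k = x k - x*` satisfy `e (k + 1) = P (e k + α k (e k - e (k - 1)))`, and the energy
`⟪(1 - P) e k, e k⟫ + ⟪P d k, d k⟫` with `d k = e k - e (k - 1)` becomes
`⟪P (1 - P) e k, e k⟫ + α k ^ 2 ‖P d k‖ ^ 2` after one step, which is at most `l * max 1 (α k ^ 2)`
times its previous value.
-/

open scoped RealInnerProductSpace
open Asymptotics

/-- The inertial (extrapolated) fixed-point iteration of a map `T` with momenta `α`. The momentum
`α (k + 1)` is the one applied to the step from `x k` to `x (k + 1)`, as in the paper. -/
def IsInertialOrbit {E : Type*} [AddCommGroup E] [Module ℝ E] (T : E → E) (α : ℕ → ℝ)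
    (x : ℕ → E) : Prop :=
  ∀ k, x (k + 2) = T (x (k + 1) + α (k + 1) • (x (k + 1) - x k))

theorem IsInertialOrbit.sub_fixedPoint {E : Type*} [AddCommGroup E] [Module ℝ E] {T : E →ₗ[ℝ] E}
    {r xs : E} {α : ℕ → ℝ} {x : ℕ → E} (hx : IsInertialOrbit (fun y ↦ T y + r) α x)
    (hxs : T xs + r = xs) : IsInertialOrbit T α fun k ↦ x k - xs := by
  intro k
  have hsplit : x (k + 1) - xs + α (k + 1) • (x (k + 1) - xs - (x k - xs)) =
      x (k + 1) + α (k + 1) • (x (k + 1) - x k) - xs := by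
    rw [sub_sub_sub_cancel_right]
    abel
  calc x (k + 2) - xs
      = T (x (k + 1) + α (k + 1) • (x (k + 1) - x k)) + r - (T xs + r) := by rw [hx k, hxs]
    _ = T (x (k + 1) - xs + α (k + 1) • (x (k + 1) - xs - (x k - xs))) := by
      rw [hsplit, map_sub, add_sub_add_right_eq_sub]

theorem IsInertialOrbit.map {E F : Type*} [AddCommGroup E] [Module ℝ E] [AddCommGroup F]
    [Module ℝ F] {T : E → E} {T' : F → F} {α : ℕ → ℝ} {x : ℕ → E} (hx : IsInertialOrbit T α x)
    (L : E →ₗ[ℝ] F) (hL : ∀ y, T' (L y) = L (T y)) : IsInertialOrbit T' α fun k ↦ L (x k) := by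
  intro k
  simp only [hx k, ← hL, map_add, map_smul, map_sub]

theorem isBigO_pow_of_eventually_norm_succ_le {E : Type*} [SeminormedAddCommGroup E] {f : ℕ → E}
    {ρ : ℝ} (hρ : 0 < ρ) (hf : ∀ᶠ k in atTop, ‖f (k + 1)‖ ≤ ρ * ‖f k‖) :
    f =O[atTop] fun k ↦ ρ ^ k := by
  obtain ⟨K, hK⟩ := eventually_atTop.1 hf
  refine .of_bound (‖f K‖ / ρ ^ K) (eventually_atTop.2 ⟨K, fun k hk ↦ ?_⟩)
  obtain ⟨j, rfl⟩ := Nat.exists_eq_add_of_le hk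
  have hgeom : ‖f (K + j)‖ ≤ ρ ^ j * ‖f K‖ :=
    le_geom (u := fun i ↦ ‖f (K + i)‖) hρ.le j fun i _ ↦ hK (K + i) (Nat.le_add_right K i)
  calc ‖f (K + j)‖ ≤ ρ ^ j * ‖f K‖ := hgeom
    _ = ‖f K‖ / ρ ^ K * ‖ρ ^ (K + j)‖ := by
      rw [Real.norm_of_nonneg (by positivity), pow_add]
      field_simp

section InnerProductSpace

variable {E : Type*} [NormedAddCommGroup E] [InnerProductSpace ℝ E] {T : E →ₗ[ℝ] E} {l : ℝ}

theorem norm_sq_apply_le_of_isPositive (hT : T.IsPositive) (hl : 0 < l)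
    (hTl : ∀ x, ⟪T x, x⟫ ≤ l * ‖x‖ ^ 2) (x : E) : ‖T x‖ ^ 2 ≤ l * ⟪T x, x⟫ := by
  -- `l t (l - t) = t ^ 2 (l - t) + t (l - t) ^ 2`, evaluated at `t = T`.
  have hexpand : l * (l * ⟪T x, x⟫ - ‖T x‖ ^ 2) =
      (l * ‖T x‖ ^ 2 - ⟪T (T x), T x⟫) + ⟪T (l • x - T x), l • x - T x⟫ := by
    simp only [map_sub, map_smul, inner_sub_left, inner_sub_right, real_inner_smul_left,
      real_inner_smul_right, hT.isSymmetric (T x) x, real_inner_self_eq_norm_sq]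
    ring
  have hlow : 0 ≤ ⟪T (l • x - T x), l • x - T x⟫ := hT.inner_nonneg_left _
  have hnonneg : 0 ≤ l * (l * ⟪T x, x⟫ - ‖T x‖ ^ 2) := by linarith [hTl (T x)]
  linarith [nonneg_of_mul_nonneg_right hnonneg hl]

theorem inner_apply_sub_norm_sq_le (hl : l ≤ 1) (hTl : ∀ x, ⟪T x, x⟫ ≤ l * ‖x‖ ^ 2) (x : E) :
    ⟪T x, x⟫ - ‖T x‖ ^ 2 ≤ l * (‖x‖ ^ 2 - ⟪T x, x⟫) := by
  -- `(l - t) (1 - t) = (l - t) ^ 2 + (1 - l) (l - t)`, evaluated at `t = T`.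
  have hsq : ‖l • x - T x‖ ^ 2 = l ^ 2 * ‖x‖ ^ 2 - 2 * l * ⟪T x, x⟫ + ‖T x‖ ^ 2 := by
    rw [norm_sub_sq_real, real_inner_smul_left, real_inner_comm, norm_smul, mul_pow,
      Real.norm_eq_abs, sq_abs]
    ring
  have hgap : 0 ≤ (1 - l) * (l * ‖x‖ ^ 2 - ⟪T x, x⟫) :=
    mul_nonneg (sub_nonneg.2 hl) (sub_nonneg.2 (hTl x))
  linarith [sq_nonneg ‖l • x - T x‖]

/-- The Lyapunov function of the inertial iteration of a linear map `T`, as a function of the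
current iterate `e` and of the last increment `d`. -/
def inertialEnergy (T : E →ₗ[ℝ] E) (e d : E) : ℝ :=
  ‖e‖ ^ 2 - ⟪T e, e⟫ + ⟪T d, d⟫

theorem inertialEnergy_step (hT : T.IsSymmetric) (a : ℝ) (e d : E) :
    inertialEnergy T (T (e + a • d)) (T (e + a • d) - e) =
      ⟪T e, e⟫ - ‖T e‖ ^ 2 + a ^ 2 * ‖T d‖ ^ 2 := by
  set z := e + a • d with hz
  have hcomplete : inertialEnergy T (T z) (T z - e) =
      ⟪T e, e⟫ - ‖T e‖ ^ 2 + ‖T z - T e‖ ^ 2 := by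
    rw [inertialEnergy, norm_sub_sq_real]
    simp only [map_sub, inner_sub_left, inner_sub_right, hT (T z) e, real_inner_comm (T z) (T e)]
    ring
  rw [hcomplete, hz, map_add, add_sub_cancel_left, map_smul, norm_smul, mul_pow,
    Real.norm_eq_abs, sq_abs]

theorem inertialEnergy_step_le (hT : T.IsPositive) (hl₀ : 0 < l) (hl₁ : l ≤ 1)
    (hTl : ∀ x, ⟪T x, x⟫ ≤ l * ‖x‖ ^ 2) {a c : ℝ} (hc : 1 ≤ c) (ha : |a| ≤ c) (e d : E) :
    inertialEnergy T (T (e + a • d)) (T (e + a • d) - e) ≤ l * c ^ 2 * inertialEnergy T e d := by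
  have hac : a ^ 2 ≤ c ^ 2 := sq_le_sq' (abs_le.1 ha).1 (abs_le.1 ha).2
  have hgap : 0 ≤ l * (‖e‖ ^ 2 - ⟪T e, e⟫) := by
    have := mul_le_mul_of_nonneg_right hl₁ (sq_nonneg ‖e‖)
    exact mul_nonneg hl₀.le (by linarith [hTl e])
  calc inertialEnergy T (T (e + a • d)) (T (e + a • d) - e)
      = (⟪T e, e⟫ - ‖T e‖ ^ 2) + a ^ 2 * ‖T d‖ ^ 2 := inertialEnergy_step hT.isSymmetric a e d
    _ ≤ l * (‖e‖ ^ 2 - ⟪T e, e⟫) + c ^ 2 * (l * ⟪T d, d⟫) :=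
      add_le_add (inner_apply_sub_norm_sq_le hl₁ hTl e)
        (mul_le_mul hac (norm_sq_apply_le_of_isPositive hT hl₀ hTl d) (sq_nonneg _) (sq_nonneg _))
    _ ≤ c ^ 2 * (l * (‖e‖ ^ 2 - ⟪T e, e⟫)) + c ^ 2 * (l * ⟪T d, d⟫) :=
      add_le_add_left (le_mul_of_one_le_left hgap (one_le_pow₀ hc)) _
    _ = l * c ^ 2 * inertialEnergy T e d := by
      rw [inertialEnergy]
      ring

theorem mul_norm_sq_le_inertialEnergy (hT : T.IsPositive) (hTl : ∀ x, ⟪T x, x⟫ ≤ l * ‖x‖ ^ 2)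
    (e d : E) : (1 - l) * ‖e‖ ^ 2 ≤ inertialEnergy T e d := by
  have hpos : 0 ≤ ⟪T d, d⟫ := hT.inner_nonneg_left d
  rw [inertialEnergy]
  linarith [hTl e]

theorem IsInertialOrbit.isBigO_sqrt_pow {α : ℕ → ℝ} {e : ℕ → E} (he : IsInertialOrbit T α e)
    (hT : T.IsPositive) (hl₀ : 0 < l) (hl₁ : l < 1) (hTl : ∀ x, ⟪T x, x⟫ ≤ l * ‖x‖ ^ 2) {c : ℝ}
    (hc : 1 ≤ c) (hα : ∀ᶠ k in atTop, |α k| ≤ c) :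
    e =O[atTop] fun k ↦ √(l * c ^ 2) ^ k := by
  set ρ := l * c ^ 2
  have hρ : 0 < ρ := by positivity
  let energy : ℕ → ℝ := fun k ↦ inertialEnergy T (e k) (e k - e (k - 1))
  have hle : ∀ k, (1 - l) * ‖e k‖ ^ 2 ≤ energy k := fun k ↦
    mul_norm_sq_le_inertialEnergy hT hTl _ _
  have hnonneg : ∀ k, 0 ≤ energy k := fun k ↦
    (mul_nonneg (sub_nonneg.2 hl₁.le) (sq_nonneg _)).trans (hle k)
  have henergy : energy =O[atTop] fun k ↦ ρ ^ k := by
    refine isBigO_pow_of_eventually_norm_succ_le hρ ?_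
    filter_upwards [hα, eventually_ge_atTop 1] with k hk hk₁
    obtain ⟨j, rfl⟩ := Nat.exists_eq_add_of_le' hk₁
    rw [Real.norm_of_nonneg (hnonneg _), Real.norm_of_nonneg (hnonneg _)]
    simpa only [energy, add_tsub_cancel_right, he j] using
      inertialEnergy_step_le hT hl₀ hl₁.le hTl hc hk (e (j + 1)) (e (j + 1) - e j)
  have hnorm : (fun k ↦ ‖e k‖ ^ 2) =O[atTop] energy := by
    refine .of_bound (1 - l)⁻¹ (.of_forall fun k ↦ ?_)
    rw [Real.norm_of_nonneg (sq_nonneg _), Real.norm_of_nonneg (hnonneg k),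
      le_inv_mul_iff₀ (sub_pos.2 hl₁)]
    exact hle k
  refine .of_norm_left (.of_pow two_ne_zero ((hnorm.trans henergy).congr_right fun k ↦ ?_))
  rw [Pi.pow_apply, ← pow_mul, mul_comm, pow_mul, Real.sq_sqrt hρ.le]

theorem exists_inner_apply_le_mul_norm_sq [FiniteDimensional ℝ E]
    (hT : ∀ x, x ≠ 0 → ⟪T x, x⟫ < ⟪x, x⟫) :
    ∃ l, 0 < l ∧ l < 1 ∧ ∀ x, ⟪T x, x⟫ ≤ l * ‖x‖ ^ 2 := by
  have hcont : Continuous fun x ↦ ⟪T x, x⟫ :=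
    (LinearMap.continuous_of_finiteDimensional T).inner continuous_id
  have hsphere : ∀ x ∈ Metric.sphere (0 : E) 1, ⟪T x, x⟫ < 1 := fun x hx ↦ by
    have hx1 : ‖x‖ = 1 := mem_sphere_zero_iff_norm.1 hx
    simpa [hx1] using hT x (norm_ne_zero_iff.1 (by simp [hx1]))
  obtain ⟨s, hs, hTs⟩ : ∃ s : ℝ, s < 1 ∧ ∀ x ∈ Metric.sphere (0 : E) 1, ⟪T x, x⟫ ≤ s :=
    (isCompact_sphere (0 : E) 1).exists_forall_le' (α := ℝᵒᵈ) hcont.continuousOn hsphere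
  refine ⟨max s (1 / 2), by positivity, max_lt hs (by norm_num), fun x ↦ ?_⟩
  rcases eq_or_ne x 0 with rfl | hx
  · simp
  have hunit : ⟪T (‖x‖⁻¹ • x), ‖x‖⁻¹ • x⟫ ≤ s :=
    hTs _ (mem_sphere_zero_iff_norm.2 (norm_smul_inv_norm hx))
  calc ⟪T x, x⟫ = ⟪T (‖x‖⁻¹ • x), ‖x‖⁻¹ • x⟫ * ‖x‖ ^ 2 := by
        rw [map_smul, real_inner_smul_left, real_inner_smul_right]
        field_simp
    _ ≤ max s (1 / 2) * ‖x‖ ^ 2 := by gcongr; exact hunit.trans (le_max_left _ _)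

theorem IsInertialOrbit.exists_isBigO_pow [FiniteDimensional ℝ E] {α : ℕ → ℝ} {e : ℕ → E}
    (he : IsInertialOrbit T α e) (hT : T.IsPositive) (hT₁ : ∀ x, x ≠ 0 → ⟪T x, x⟫ < ⟪x, x⟫)
    (hα : ∀ c > 1, ∀ᶠ k in atTop, |α k| ≤ c) :
    ∃ β : ℝ, 0 ≤ β ∧ β < 1 ∧ e =O[atTop] fun k ↦ β ^ k := by
  obtain ⟨l, hl₀, hl₁, hTl⟩ := exists_inner_apply_le_mul_norm_sq hT₁
  have hc : 1 < 2 / (1 + l) := by rw [one_lt_div (by positivity)]; linarith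
  have hrate : l * (2 / (1 + l)) ^ 2 < 1 := by
    rw [div_pow, mul_div_assoc', div_lt_one (by positivity)]
    nlinarith [sq_pos_of_pos (sub_pos.2 hl₁)]
  refine ⟨√(l * (2 / (1 + l)) ^ 2), Real.sqrt_nonneg _, ?_,
    he.isBigO_sqrt_pow hT hl₀ hl₁ hTl hc.le (hα _ hc)⟩
  rwa [Real.sqrt_lt' one_pos, one_pow]

end InnerProductSpace

section Matrix

variable {ι : Type*}

theorem posDef_one_add_smul_gram [Finite ι] [DecidableEq ι] {κ : Type*} [Fintype κ]
    (A : Matrix κ ι ℝ) {μ : ℝ} (hμ : 0 ≤ μ) : (1 + μ • (Aᵀ * A)).PosDef :=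
  PosDef.one.add_posSemidef ((posSemidef_conjTranspose_mul_self A).smul hμ)

theorem posSemidef_relaxation [DecidableEq ι] {W : Matrix ι ι ℝ} {θ : ℝ}
    (hW : W.PosSemidef) (hθ₀ : 0 ≤ θ) (hθ₁ : θ ≤ 1) :
    (θ • W + (1 - θ) • 1).PosSemidef :=
  (hW.smul hθ₀).add (PosSemidef.one.smul (sub_nonneg.2 hθ₁))

variable [Fintype ι]

theorem posDef_add_of_mulVec_eq_zero {S T : Matrix ι ι ℝ} (hS : S.PosSemidef)
    (hT : T.PosSemidef) (hker : ∀ x, S *ᵥ x = 0 → T *ᵥ x = 0 → x = 0) : (S + T).PosDef := by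
  refine .of_dotProduct_mulVec_pos (hS.isHermitian.add hT.isHermitian) fun x hx ↦ ?_
  have hSx := hS.dotProduct_mulVec_nonneg x
  have hTx := hT.dotProduct_mulVec_nonneg x
  rw [add_mulVec, dotProduct_add]
  refine (add_nonneg hSx hTx).lt_of_ne' fun hsum ↦ hx ?_
  obtain ⟨hSx₀, hTx₀⟩ := (add_eq_zero_iff_of_nonneg hSx hTx).1 hsum
  exact hker x ((hS.dotProduct_mulVec_zero_iff x).1 hSx₀) ((hT.dotProduct_mulVec_zero_iff x).1 hTx₀)

variable [DecidableEq ι]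

theorem isUnit_one_sub_inv_mul {R : Type*} [CommRing R] {M V : Matrix ι ι R} (hM : IsUnit M)
    (hMV : IsUnit (M - V)) : IsUnit (1 - M⁻¹ * V) := by
  have hfactor : 1 - M⁻¹ * V = M⁻¹ * (M - V) := by
    rw [Matrix.mul_sub, nonsing_inv_mul _ ((isUnit_iff_isUnit_det M).1 hM)]
  rw [hfactor]
  exact (isUnit_nonsing_inv_iff.2 hM).mul hMV

theorem mulVec_one_sub_inv_mulVec_add {R : Type*} [CommRing R] {P : Matrix ι ι R}
    (hP : IsUnit (1 - P)) (r : ι → R) :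
    P *ᵥ ((1 - P)⁻¹ *ᵥ r) + r = (1 - P)⁻¹ *ᵥ r := by
  have hsolve : (1 - P) *ᵥ ((1 - P)⁻¹ *ᵥ r) = r := by
    rw [mulVec_mulVec, mul_nonsing_inv _ ((isUnit_iff_isUnit_det _).1 hP), one_mulVec]
  rw [sub_mulVec, one_mulVec, sub_eq_iff_eq_add'] at hsolve
  exact hsolve.symm

theorem posDef_sub_relaxation {κ : Type*} [Fintype κ] {A : Matrix κ ι ℝ} {W : Matrix ι ι ℝ}
    {μ θ : ℝ} (hW₁ : (1 - W).PosSemidef)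
    (hker : ∀ x, A *ᵥ x = 0 → W *ᵥ x = x → x = 0) (hμ : 0 < μ) (hθ : 0 < θ) :
    (1 + μ • (Aᵀ * A) - (θ • W + (1 - θ) • 1)).PosDef := by
  have hsplit : 1 + μ • (Aᵀ * A) - (θ • W + (1 - θ) • 1) = μ • (Aᵀ * A) + θ • (1 - W) := by
    module
  have hgram : (Aᵀ * A).PosSemidef := posSemidef_conjTranspose_mul_self A
  rw [hsplit]
  refine posDef_add_of_mulVec_eq_zero (hgram.smul hμ.le) (hW₁.smul hθ.le) fun x hA hWx ↦
    hker x ?_ ?_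
  · rw [smul_mulVec, smul_eq_zero_iff_right hμ.ne'] at hA
    exact (conjTranspose_mul_self_mulVec_eq_zero A x).1 hA
  · rw [smul_mulVec, smul_eq_zero_iff_right hθ.ne', sub_mulVec, one_mulVec, sub_eq_zero] at hWx
    exact hWx.symm

theorem inner_toEuclideanLin_lt_inner_self {C : Matrix ι ι ℝ} (hC : (1 - C).PosDef)
    {x : EuclideanSpace ℝ ι} (hx : x ≠ 0) : ⟪C.toEuclideanLin x, x⟫ < ⟪x, x⟫ := by
  have hgap := hC.dotProduct_mulVec_pos (mt (WithLp.ofLp_eq_zero 2).1 hx)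
  rw [sub_mulVec, one_mulVec, dotProduct_sub, sub_pos] at hgap
  rw [real_inner_comm]
  simpa only [EuclideanSpace.inner_eq_star_dotProduct, ofLp_toLpLin, toLin'_apply,
    dotProduct_comm] using hgap

variable {M V : Matrix ι ι ℝ}

open scoped MatrixOrder in
theorem exists_isUnit_eq_conjTranspose_mul_self (hM : M.PosDef) :
    ∃ B : Matrix ι ι ℝ, IsUnit B ∧ M = Bᴴ * B :=
  CStarAlgebra.isStrictlyPositive_iff_eq_star_mul_self.1 hM.isStrictlyPositive

/-- A factorization `M = Bᴴ * B` makes `B` an isometry from the inner product `⟪x, y⟫ = xᵀ M y` to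
the Euclidean one, hence conjugates `M⁻¹ * V` to a symmetric matrix. -/
theorem exists_posSemidef_semiconj_inv_mul (hM : M.PosDef) (hV : V.PosSemidef)
    (hMV : (M - V).PosDef) :
    ∃ B C : Matrix ι ι ℝ, IsUnit B ∧ C.PosSemidef ∧ (1 - C).PosDef ∧ C * B = B * (M⁻¹ * V) := by
  obtain ⟨B, hB, rfl⟩ := exists_isUnit_eq_conjTranspose_mul_self hM
  have hBB : B * B⁻¹ = 1 := mul_nonsing_inv _ ((isUnit_iff_isUnit_det B).1 hB)
  have hBB' : B⁻¹ * B = 1 := nonsing_inv_mul _ ((isUnit_iff_isUnit_det B).1 hB)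
  refine ⟨B, B⁻¹ᴴ * V * B⁻¹, hB, hV.conjTranspose_mul_mul_same B⁻¹, ?_, ?_⟩
  · have hcongr : B⁻¹ᴴ * (Bᴴ * B - V) * B⁻¹ = 1 - B⁻¹ᴴ * V * B⁻¹ := by
      rw [Matrix.mul_sub, Matrix.sub_mul, ← Matrix.mul_assoc B⁻¹ᴴ, ← conjTranspose_mul, hBB,
        conjTranspose_one, Matrix.one_mul, hBB]
    rw [← hcongr]
    exact hMV.conjTranspose_mul_mul_same
      (mulVec_injective_of_isUnit (isUnit_nonsing_inv_iff.2 hB))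
  · calc B⁻¹ᴴ * V * B⁻¹ * B = B * B⁻¹ * (Bᴴ)⁻¹ * V := by
          rw [Matrix.mul_assoc _ B⁻¹, hBB', hBB, Matrix.mul_one, Matrix.one_mul,
            conjTranspose_nonsing_inv]
      _ = B * ((Bᴴ * B)⁻¹ * V) := by simp only [Matrix.mul_inv_rev, Matrix.mul_assoc]

theorem IsInertialOrbit.exists_isBigO_pow_of_posDef {α : ℕ → ℝ} {e : ℕ → ι → ℝ}
    (he : IsInertialOrbit (M⁻¹ * V).mulVecLin α e) (hM : M.PosDef) (hV : V.PosSemidef)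
    (hMV : (M - V).PosDef) (hα : ∀ c > 1, ∀ᶠ k in atTop, |α k| ≤ c) :
    ∃ β : ℝ, 0 ≤ β ∧ β < 1 ∧ (fun k ↦ WithLp.toLp 2 (e k)) =O[atTop] fun k ↦ β ^ k := by
  obtain ⟨B, C, hB, hC, hC₁, hCB⟩ := exists_posSemidef_semiconj_inv_mul hM hV hMV
  let L : (ι → ℝ) →ₗ[ℝ] EuclideanSpace ℝ ι :=
    (WithLp.linearEquiv 2 ℝ (ι → ℝ)).symm.toLinearMap ∘ₗ B.mulVecLin
  have hL (y : ι → ℝ) : C.toEuclideanLin (L y) = L ((M⁻¹ * V).mulVecLin y) := by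
    change WithLp.toLp 2 (C *ᵥ (B *ᵥ y)) = WithLp.toLp 2 (B *ᵥ ((M⁻¹ * V) *ᵥ y))
    rw [mulVec_mulVec, mulVec_mulVec, hCB]
  have hBL (y : ι → ℝ) : B⁻¹.toEuclideanLin (L y) = WithLp.toLp 2 y := by
    change WithLp.toLp 2 (B⁻¹ *ᵥ (B *ᵥ y)) = WithLp.toLp 2 y
    rw [mulVec_mulVec, nonsing_inv_mul _ ((isUnit_iff_isUnit_det B).1 hB), one_mulVec]
  obtain ⟨β, hβ₀, hβ₁, hβ⟩ := (he.map L hL).exists_isBigO_pow (isPositive_toEuclideanLin_iff.2 hC)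
    (fun _ ↦ inner_toEuclideanLin_lt_inner_self hC₁) hα
  have hback : (fun k ↦ WithLp.toLp 2 (e k)) =O[atTop] fun k ↦ L (e k) := by
    simp only [← hBL]
    exact B⁻¹.toEuclideanLin.toContinuousLinearMap.isBigO_comp (fun k ↦ L (e k)) atTop
  exact ⟨β, hβ₀, hβ₁, hback.trans hβ⟩

end Matrix

section REDAPG

variable {n m : ℕ}

theorem isInertialOrbit_redAPG {A : Matrix (Fin m) (Fin n) ℝ} {W : Matrix (Fin n) (Fin n) ℝ}
    {μ θ : ℝ} {b : Fin m → ℝ} {α : ℕ → ℝ} {x y v : ℕ → Fin n → ℝ}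
    (hx : ∀ k, 1 ≤ k → x k = Hmat A μ *ᵥ (v (k - 1) + μ • (Aᵀ *ᵥ b)))
    (hy : ∀ k, 1 ≤ k → y k = x k + α k • (x k - x (k - 1)))
    (hv : ∀ k, 1 ≤ k → v k = θ • (W *ᵥ y k) + (1 - θ) • y k) :
    IsInertialOrbit (fun z ↦ (Pmat A W μ θ).mulVecLin z + μ • (Hmat A μ *ᵥ (Aᵀ *ᵥ b))) α x := by
  intro k
  have hvk : v (k + 1) = (θ • W + (1 - θ) • 1) *ᵥ y (k + 1) := by
    rw [hv _ k.succ_pos, add_mulVec, smul_mulVec, smul_mulVec, one_mulVec]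
  rw [hx (k + 2) (by lia), show k + 2 - 1 = k + 1 from rfl, hvk, mulVec_add, mulVec_smul,
    mulVec_mulVec, hy (k + 1) k.succ_pos]
  rfl

theorem norm2_eq_norm_toLp (x : Fin n → ℝ) : norm2 x = ‖WithLp.toLp 2 x‖ := by
  simp only [norm2, EuclideanSpace.norm_eq, Real.norm_eq_abs, sq_abs]

theorem exists_norm2_le_of_isBigO {e : ℕ → Fin n → ℝ} {β : ℝ} (hβ : 0 ≤ β)
    (he : (fun k ↦ WithLp.toLp 2 (e k)) =O[atTop] fun k ↦ β ^ k) :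
    ∃ C, 0 < C ∧ ∃ K, 1 ≤ K ∧ ∀ k, K ≤ k → norm2 (e k) ≤ C * β ^ k := by
  obtain ⟨C, hC, hCe⟩ := he.exists_pos
  obtain ⟨K, hK⟩ := eventually_atTop.1 hCe.bound
  refine ⟨C, hC, max K 1, le_max_right _ _, fun k hk ↦ ?_⟩
  simpa only [norm2_eq_norm_toLp, Real.norm_of_nonneg (pow_nonneg hβ k)] using
    hK k ((le_max_left _ _).trans hk)

end REDAPG

theorem stmt10_general (n m : ℕ) (A : Matrix (Fin m) (Fin n) ℝ) (b : Fin m → ℝ)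
    (W : Matrix (Fin n) (Fin n) ℝ) (hW : W.PosSemidef) (hW1 : (1 - W).PosSemidef)
    (hker : ∀ x : Fin n → ℝ, A *ᵥ x = 0 → W *ᵥ x = x → x = 0)
    (μ θ : ℝ) (hμ : 0 < μ) (hθ0 : 0 < θ) (hθ1 : θ ≤ 1)
    (α : ℕ → ℝ) (hα : ∀ c > 1, ∀ᶠ k in atTop, |α k| ≤ c) :
    IsUnit (1 - Pmat A W μ θ) ∧
    ∀ x y v : ℕ → Fin n → ℝ,
      (∀ k, 1 ≤ k → x k = Hmat A μ *ᵥ (v (k - 1) + μ • (Aᵀ *ᵥ b))) →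
      (∀ k, 1 ≤ k → y k = x k + α k • (x k - x (k - 1))) →
      (∀ k, 1 ≤ k → v k = θ • (W *ᵥ y k) + (1 - θ) • y k) →
      ∃ C, 0 < C ∧ ∃ β, 0 ≤ β ∧ β < 1 ∧ ∃ K, 1 ≤ K ∧ ∀ k, K ≤ k →
        norm2 (x k - (1 - Pmat A W μ θ)⁻¹ *ᵥ (μ • (Hmat A μ *ᵥ (Aᵀ *ᵥ b)))) ≤ C * β ^ k := by
  have hM := posDef_one_add_smul_gram A hμ.le
  have hMV := posDef_sub_relaxation hW1 hker hμ hθ0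
  have hunit : IsUnit (1 - Pmat A W μ θ) := isUnit_one_sub_inv_mul hM.isUnit hMV.isUnit
  refine ⟨hunit, fun x y v hx hy hv ↦ ?_⟩
  have horbit := (isInertialOrbit_redAPG hx hy hv).sub_fixedPoint
    (mulVec_one_sub_inv_mulVec_add hunit _)
  obtain ⟨β, hβ₀, hβ₁, hβ⟩ := horbit.exists_isBigO_pow_of_posDef hM
    (posSemidef_relaxation hW hθ0.le hθ1) hMV hα
  obtain ⟨C, hC, hK⟩ := exists_norm2_le_of_isBigO hβ₀ hβ
  exact ⟨C, hC, β, hβ₀, hβ₁, hK⟩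

theorem stmt10 (n m : ℕ) (A : Matrix (Fin m) (Fin n) ℝ) (b : Fin m → ℝ)
    (W : Matrix (Fin n) (Fin n) ℝ)
    (hW : W.PosSemidef) (hW1 : ((1 : Matrix (Fin n) (Fin n) ℝ) - W).PosSemidef)
    (hker : ∀ x : Fin n → ℝ, A *ᵥ x = 0 → W *ᵥ x = x → x = 0)
    (μ θ : ℝ) (hμ : 0 < μ) (hθ0 : 0 < θ) (hθ1 : θ ≤ 1)
    (α : ℕ → ℝ) (hα : Tendsto α atTop (nhds 1)) :
    IsUnit ((1 : Matrix (Fin n) (Fin n) ℝ) - Pmat A W μ θ) ∧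
    ∀ x y v : ℕ → Fin n → ℝ,
      (∀ k, 1 ≤ k → x k = Hmat A μ *ᵥ (v (k - 1) + μ • (Aᵀ *ᵥ b))) →
      (∀ k, 1 ≤ k → y k = x k + α k • (x k - x (k - 1))) →
      (∀ k, 1 ≤ k → v k = θ • (W *ᵥ y k) + (1 - θ) • y k) →
      ∃ C, 0 < C ∧ ∃ β, 0 ≤ β ∧ β < 1 ∧ ∃ K, 1 ≤ K ∧ ∀ k, K ≤ k →
        norm2 (x k -
          ((1 : Matrix (Fin n) (Fin n) ℝ) - Pmat A W μ θ)⁻¹ *ᵥ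
            (μ • (Hmat A μ *ᵥ (Aᵀ *ᵥ b)))) ≤ C * β ^ k :=
  stmt10_general n m A b W hW hW1 hker μ θ hμ hθ0 hθ1 α fun _ hc ↦
    hα.abs.eventually_le_const (by rwa [abs_one])
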